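/- Convergence of the n-order D-index (Theorem 5.1): let G be a finite directed graph and v a vertex. Define D^(0)(v) = {(in-degree of v in G, out-degree of v in G)}, and for n > 0 define D^(n)(v) to be the set of pairs (k,l) of naturals that are maximal under the dominance order ⪯ among all pairs (k,l) such that (a) at least k in-neighbors u of v have some pair (k_u,l_u) ∈ D^(n-1)(u) with k ≤ k_u and l ≤ l_u, and (b) at least l out-neighbors w of v have some pair (k_w,l_w) ∈ D^(n-1)(w) with k ≤ k_w and l ≤ l_w. Then the sequence n ↦ D^(n)(v) is eventually constant and its eventual value equals SC(v), the set of skyline corenesses of v. -/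

import Mathlib

open Finset

variable {V : Type*} [Fintype V] [DecidableEq V]

/-- The in-neighbors of `v` within `S`: vertices `u ∈ S` with an edge `u → v`. -/
def inN (E : V → V → Prop) [DecidableRel E] (S : Finset V) (v : V) : Finset V :=
  S.filter (fun u => E u v)

/-- The out-neighbors of `v` within `S`: vertices `u ∈ S` with an edge `v → u`. -/
def outN (E : V → V → Prop) [DecidableRel E] (S : Finset V) (v : V) : Finset V :=
  S.filter (fun u => E v u)

/-- `S` satisfies the `(k,l)`-degree constraints: every `v ∈ S` has at least `k`
in-neighbors in `S` and at least `l` out-neighbors in `S`. -/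
def satisfiesKL (E : V → V → Prop) [DecidableRel E] (k l : ℕ) (S : Finset V) : Prop :=
  ∀ v ∈ S, k ≤ (inN E S v).card ∧ l ≤ (outN E S v).card

instance (E : V → V → Prop) [DecidableRel E] (k l : ℕ) (S : Finset V) :
    Decidable (satisfiesKL E k l S) := by unfold satisfiesKL; infer_instance

/-- The `(k,l)`-core of the graph: the union of all vertex subsets satisfying the
`(k,l)`-degree constraints. -/
def core (E : V → V → Prop) [DecidableRel E] (k l : ℕ) : Finset V :=
  (Finset.univ.powerset.filter (satisfiesKL E k l)).sup id

/-- `kmax E v`: the largest `k` such that `v` belongs to the `(k,0)`-core. -/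
noncomputable def kmax (E : V → V → Prop) [DecidableRel E] (v : V) : ℕ :=
  sSup {k : ℕ | v ∈ core E k 0}

/-- `lmax E v k`: the largest `l` such that `v` belongs to the `(k,l)`-core. -/
noncomputable def lmax (E : V → V → Prop) [DecidableRel E] (v : V) (k : ℕ) : ℕ :=
  sSup {l : ℕ | v ∈ core E k l}

/-- The H-index of a finite multiset of naturals: the largest `h` such that at least
`h` elements (with multiplicity) are `≥ h`. -/
noncomputable def hIndex (M : Multiset ℕ) : ℕ :=
  sSup {h : ℕ | h ≤ (M.filter (fun x => h ≤ x)).card}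

/-- The `n`-order in-H-index of a vertex `v` in the graph with vertex set `S`
and edge relation `E`. -/
noncomputable def iH (E : V → V → Prop) [DecidableRel E] (S : Finset V) : ℕ → V → ℕ
  | 0 => fun v => (inN E S v).card
  | n + 1 => fun v => hIndex ((inN E S v).val.map (iH E S n))

/-- The `n`-order out-H-index of a vertex `v` in the graph with vertex set `S`
and edge relation `E`. -/
noncomputable def oH (E : V → V → Prop) [DecidableRel E] (S : Finset V) : ℕ → V → ℕ
  | 0 => fun v => (outN E S v).card
  | n + 1 => fun v => hIndex ((outN E S v).val.map (oH E S n))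

/-- The eventual (limit) value of the in-H-index sequence. -/
noncomputable def iHlim (E : V → V → Prop) [DecidableRel E] (S : Finset V) (v : V) : ℕ :=
  ⨅ n, iH E S n v

/-- The eventual (limit) value of the out-H-index sequence. -/
noncomputable def oHlim (E : V → V → Prop) [DecidableRel E] (S : Finset V) (v : V) : ℕ :=
  ⨅ n, oH E S n v

/-- `(k,l)` is a skyline coreness of `v`: `v` is in the `(k,l)`-core and there is no
pair `(k',l')` strictly dominating `(k,l)` with `v` in the `(k',l')`-core. -/
def skyline (E : V → V → Prop) [DecidableRel E] (v : V) (p : ℕ × ℕ) : Prop :=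
  v ∈ core E p.1 p.2 ∧
    ¬ ∃ q : ℕ × ℕ, (p.1 ≤ q.1 ∧ p.2 ≤ q.2 ∧ p ≠ q) ∧ v ∈ core E q.1 q.2

/-- A pair `p` is a candidate at step `n+1` for vertex `v` w.r.t. previous-step indices `D`:
at least `p.1` in-neighbors and at least `p.2` out-neighbors carry a pair dominating `p`. -/
def cand (E : V → V → Prop) (D : V → Set (ℕ × ℕ)) (v : V) (p : ℕ × ℕ) : Prop :=
  p.1 ≤ Set.ncard {u : V | E u v ∧ ∃ q ∈ D u, p.1 ≤ q.1 ∧ p.2 ≤ q.2} ∧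
  p.2 ≤ Set.ncard {u : V | E v u ∧ ∃ q ∈ D u, p.1 ≤ q.1 ∧ p.2 ≤ q.2}

/-- The `n`-order D-index: `D^(0)(v) = {(indeg v, outdeg v)}`, and `D^(n+1)(v)` is the set
of pairs maximal under the dominance order among the candidates w.r.t. `D^(n)`. -/
noncomputable def Dseq (E : V → V → Prop) [DecidableRel E] : ℕ → V → Set (ℕ × ℕ)
  | 0 => fun v => {((inN E Finset.univ v).card, (outN E Finset.univ v).card)}
  | n + 1 => fun v =>
      {p | cand E (Dseq E n) v p ∧
        ∀ q : ℕ × ℕ, cand E (Dseq E n) v q → p.1 ≤ q.1 → p.2 ≤ q.2 → p = q}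

def peel (E : V → V → Prop) [DecidableRel E] (p : ℕ × ℕ) : ℕ → Finset V
  | 0 => Finset.univ
  | n + 1 => Finset.univ.filter (fun v =>
      p.1 ≤ (inN E (peel E p n) v).card ∧ p.2 ≤ (outN E (peel E p n) v).card)

lemma mem_peel_succ (E : V → V → Prop) [DecidableRel E] (p : ℕ × ℕ) (n : ℕ) (v : V) :
    v ∈ peel E p (n + 1) ↔
      p.1 ≤ (inN E (peel E p n) v).card ∧ p.2 ≤ (outN E (peel E p n) v).card := by
  simp [peel]

lemma inN_card_mono (E : V → V → Prop) [DecidableRel E] {S T : Finset V} (h : S ⊆ T) (v : V) :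
    (inN E S v).card ≤ (inN E T v).card :=
  Finset.card_le_card (Finset.filter_subset_filter _ h)

lemma outN_card_mono (E : V → V → Prop) [DecidableRel E] {S T : Finset V} (h : S ⊆ T) (v : V) :
    (outN E S v).card ≤ (outN E T v).card :=
  Finset.card_le_card (Finset.filter_subset_filter _ h)

lemma peel_succ_subset (E : V → V → Prop) [DecidableRel E] (p : ℕ × ℕ) (n : ℕ) :
    peel E p (n + 1) ⊆ peel E p n := by
  induction n with
  | zero => exact Finset.subset_univ _
  | succ n ih =>
    intro v hv
    rw [mem_peel_succ] at hv ⊢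
    exact ⟨hv.1.trans (inN_card_mono E ih v), hv.2.trans (outN_card_mono E ih v)⟩

lemma peel_stab (E : V → V → Prop) [DecidableRel E] (p : ℕ × ℕ) (n : ℕ) :
    (peel E p n).card + n ≤ Fintype.card V ∨ peel E p (n + 1) = peel E p n := by
  induction n with
  | zero => left; simp [peel]
  | succ n ih =>
    by_cases h : peel E p (n + 1) = peel E p n
    · right
      ext v
      rw [mem_peel_succ, mem_peel_succ, h]
    · left
      have h1 := Finset.card_lt_card (Finset.ssubset_iff_subset_ne.2 ⟨peel_succ_subset E p n, h⟩)
      rcases ih with ih | ih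
      · omega
      · exact absurd ih h

lemma mem_core_iff (E : V → V → Prop) [DecidableRel E] (k l : ℕ) (v : V) :
    v ∈ core E k l ↔ ∃ S : Finset V, satisfiesKL E k l S ∧ v ∈ S := by
  simp [core, Finset.mem_sup]

lemma sat_subset_peel (E : V → V → Prop) [DecidableRel E] (p : ℕ × ℕ) (S : Finset V)
    (hS : satisfiesKL E p.1 p.2 S) (n : ℕ) : S ⊆ peel E p n := by
  induction n with
  | zero => exact Finset.subset_univ _
  | succ n ih =>
    intro v hv
    rw [mem_peel_succ]
    exact ⟨(hS v hv).1.trans (inN_card_mono E ih v), (hS v hv).2.trans (outN_card_mono E ih v)⟩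

lemma peel_eq_core (E : V → V → Prop) [DecidableRel E] (p : ℕ × ℕ) (n : ℕ)
    (hn : Fintype.card V < n) (v : V) : v ∈ peel E p n ↔ v ∈ core E p.1 p.2 := by
  rw [mem_core_iff]
  constructor
  · intro hv
    refine ⟨peel E p n, ?_, hv⟩
    have h : peel E p (n + 1) = peel E p n := (peel_stab E p n).resolve_left (by omega)
    intro w hw
    rw [← h] at hw
    exact (mem_peel_succ E p n w).1 hw
  · rintro ⟨S, hS, hv⟩
    exact sat_subset_peel E p S hS n hv

lemma cand_mono (E : V → V → Prop) (D : V → Set (ℕ × ℕ)) (v : V) (p q : ℕ × ℕ)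
    (h1 : p.1 ≤ q.1) (h2 : p.2 ≤ q.2) (h : cand E D v q) : cand E D v p := by
  refine ⟨h1.trans (h.1.trans (Set.ncard_le_ncard ?_ (Set.toFinite _))),
    h2.trans (h.2.trans (Set.ncard_le_ncard ?_ (Set.toFinite _)))⟩ <;>
  · rintro u ⟨hu, r, hr, a, b⟩
    exact ⟨hu, r, hr, h1.trans a, h2.trans b⟩

lemma cand_bdd (E : V → V → Prop) (D : V → Set (ℕ × ℕ)) (v : V) (p : ℕ × ℕ)
    (h : cand E D v p) : p.1 ≤ Fintype.card V ∧ p.2 ≤ Fintype.card V := by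
  rw [← Nat.card_eq_fintype_card]
  exact ⟨h.1.trans (Set.ncard_le_card _), h.2.trans (Set.ncard_le_card _)⟩

lemma exists_max (P : ℕ × ℕ → Prop) (N : ℕ) (hN : ∀ p, P p → p.1 ≤ N ∧ p.2 ≤ N)
    (p : ℕ × ℕ) (hp : P p) : ∃ q, (P q ∧ ∀ r : ℕ × ℕ, P r → q.1 ≤ r.1 → q.2 ≤ r.2 → q = r) ∧
      p.1 ≤ q.1 ∧ p.2 ≤ q.2 := by
  have hf : {p | P p}.Finite := (Set.finite_Iic ((N, N) : ℕ × ℕ)).subset (fun p h => hN p h)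
  obtain ⟨q, hpq, hq⟩ := hf.exists_le_maximal hp
  exact ⟨q, ⟨hq.prop, fun r hr a b => hq.eq_of_le hr ⟨a, b⟩⟩, hpq.1, hpq.2⟩

lemma dom_succ (E : V → V → Prop) [DecidableRel E] (n : ℕ) (v : V) (p : ℕ × ℕ) :
    (∃ q ∈ Dseq E (n + 1) v, p.1 ≤ q.1 ∧ p.2 ≤ q.2) ↔ cand E (Dseq E n) v p := by
  constructor
  · rintro ⟨q, hq, a, b⟩
    exact cand_mono E _ v p q a b hq.1
  · intro h
    exact exists_max _ _ (cand_bdd E (Dseq E n) v) p h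

lemma dom_iff (E : V → V → Prop) [DecidableRel E] (n : ℕ) (v : V) (p : ℕ × ℕ) :
    (∃ q ∈ Dseq E n v, p.1 ≤ q.1 ∧ p.2 ≤ q.2) ↔ v ∈ peel E p (n + 1) := by
  induction n generalizing v with
  | zero => rw [mem_peel_succ]; simp [Dseq, peel]
  | succ n ih =>
    rw [dom_succ, mem_peel_succ]
    unfold cand
    simp only [ih]
    rw [← Set.ncard_coe_finset, ← Set.ncard_coe_finset]
    simp [inN, outN, and_comm]

/-- **Theorem 5.1: convergence of the `n`-order D-index.** The sequence
`n ↦ D^(n)(v)` is eventually constant and its eventual value is the set `SC(v)` of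
skyline corenesses of `v`. -/
theorem Dseq_converges_to_skyline (E : V → V → Prop) [DecidableRel E] (v : V) :
    ∃ N : ℕ, ∀ n : ℕ, N ≤ n → Dseq E n v = {p : ℕ × ℕ | skyline E v p} := by
  refine ⟨Fintype.card V + 1, fun n hn => ?_⟩
  obtain ⟨m, rfl⟩ : ∃ m, n = m + 1 := ⟨n - 1, by omega⟩
  have hc : ∀ p : ℕ × ℕ, cand E (Dseq E m) v p ↔ v ∈ core E p.1 p.2 := fun p => by
    rw [← dom_succ, dom_iff, peel_eq_core E p _ (by omega)]
  ext p
  simp only [Dseq, skyline, Set.mem_setOf_eq, hc]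
  refine and_congr_right fun _ => ⟨?_, ?_⟩
  · rintro h ⟨q, ⟨a, b, c⟩, d⟩
    exact c (h q d a b)
  · intro h q d a b
    by_contra c
    exact h ⟨q, ⟨a, b, c⟩, d⟩
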